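/- Let p ≥ 5 and 2 ≤ r ≤ p−3 be integers, k ∈ ℕ₀, and 0 = τ₀ < τ₁ < ⋯ < τ_k < τ_{k+1} = 1. Let α^(L), α^(R), β^(L), β^(R) : ℝ → ℝ be polynomial functions of degree at most 1 with α^(L)(v)·α^(R)(v) < 0 for all v ∈ [0,1]; set β = α^(L)β^(R) − α^(R)β^(L), let q be the monic greatest common divisor of α^(L) and α^(R), α̃^(S) = α^(S)/q, and z_β = #{ i ∈ {1,…,k} : β(τ_i) = 0 }. Define Γ₀ as the set of twice differentiable functions g̃₀ : [0,1] → ℝ for which there exist a differentiable function g̃₁ : [0,1] → ℝ and a function g̃₂ : [0,1] → ℝ such that for both S ∈ {L,R}: g̃₀ ∈ S(p,r); α̃^(S)·g̃₁ + β^(S)·g̃₀′ ∈ S(p,r); and (β^(S))²·g̃₀″ + 2α̃^(S)β^(S)·(g̃₁′ − g̃₁·q′/q) + (α̃^(S))²·g̃₂ ∈ S(p,r). Then Γ₀ = S̃(p), and dim Γ₀ = k(p − r − 1) + p + z_β + 1. -/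

import Mathlib

open Set Polynomial

noncomputable section

/-- `f : ℝ → ℝ` restricted to `[0,1]` is a spline of degree at most `d` for the knots
`0 = τ 0 < τ 1 < ⋯ < τ k < τ (k+1) = 1`, with smoothness of order `s i` at the interior
knot `τ i` (`1 ≤ i ≤ k`): on each knot interval `f` coincides with a polynomial of degree
at most `d`, and the one-sided derivatives of orders `0, …, s i` (computed from the
polynomial pieces) agree at each interior knot `τ i`. -/
def IsSplineOn (k : ℕ) (τ : ℕ → ℝ) (d : ℕ) (s : ℕ → ℕ) (f : ℝ → ℝ) : Prop :=
  ∃ P : ℕ → Polynomial ℝ,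
    (∀ i ≤ k, (P i).natDegree ≤ d) ∧
    (∀ i ≤ k, ∀ x ∈ Set.Icc (τ i) (τ (i+1)), f x = (P i).eval x) ∧
    (∀ i, 1 ≤ i → i ≤ k → ∀ j ≤ s i,
      ((fun Q : Polynomial ℝ => Polynomial.derivative Q)^[j] (P (i-1))).eval (τ i) =
        ((fun Q : Polynomial ℝ => Polynomial.derivative Q)^[j] (P i)).eval (τ i))

/-- The spline space `S(d, s)` on `[0,1]`, as a set of functions `[0,1] → ℝ`:
restrictions to `[0,1]` of the functions described by `IsSplineOn`. -/
def SplineSpace (k : ℕ) (τ : ℕ → ℝ) (d : ℕ) (s : ℕ → ℕ) :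
    Set (Set.Icc (0:ℝ) 1 → ℝ) :=
  {g | ∃ f : ℝ → ℝ, IsSplineOn k τ d s f ∧ ∀ x : Set.Icc (0:ℝ) 1, g x = f x.1}
/-- The set Γ₀: twice differentiable functions g̃₀ on [0,1] for which there exist a
differentiable g̃₁ and a function g̃₂ such that g̃₀ ∈ S(p,r) and, for both S ∈ {L,R},
α̃^(S)·g̃₁ + β^(S)·g̃₀′ ∈ S(p,r) and
(β^(S))²·g̃₀″ + 2α̃^(S)β^(S)·(g̃₁′ − g̃₁·q′/q) + (α̃^(S))²·g̃₂ ∈ S(p,r). -/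
def Gamma0 (k : ℕ) (τ : ℕ → ℝ) (p r : ℕ) (αtL αtR βL βR q : Polynomial ℝ) :
    Set (Set.Icc (0:ℝ) 1 → ℝ) :=
  {g | ∃ g0 g1 g2 : ℝ → ℝ,
    (∀ x : Set.Icc (0:ℝ) 1, g x = g0 x.1) ∧
    DifferentiableOn ℝ g0 (Set.Icc 0 1) ∧
    DifferentiableOn ℝ (derivWithin g0 (Set.Icc 0 1)) (Set.Icc 0 1) ∧
    DifferentiableOn ℝ g1 (Set.Icc 0 1) ∧
    IsSplineOn k τ p (fun _ => r) g0 ∧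
    (∀ A B : Polynomial ℝ, ((A, B) = (αtL, βL) ∨ (A, B) = (αtR, βR)) →
      IsSplineOn k τ p (fun _ => r)
        (fun v => A.eval v * g1 v + B.eval v * derivWithin g0 (Set.Icc 0 1) v) ∧
      IsSplineOn k τ p (fun _ => r) (fun v =>
        (B.eval v) ^ 2 * derivWithin (derivWithin g0 (Set.Icc 0 1)) (Set.Icc 0 1) v +
          2 * A.eval v * B.eval v *
            (derivWithin g1 (Set.Icc 0 1) v -
              g1 v * (Polynomial.derivative q).eval v / q.eval v) +
          (A.eval v) ^ 2 * g2 v))}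

/-!
A piecewise polynomial is `C^s` at a knot `t` exactly when `(X - t) ^ (s + 1)` divides the jump of
its pieces there. For `g̃₀ ∈ Γ₀`, eliminating `g̃₁` from the two conditions of first order shows
that the jumps of `(α̃^(L) β^(R) - α̃^(R) β^(L)) g̃₀′` are divisible by `(X - t) ^ (r + 1)`; where
`β(t) ≠ 0` the first factor is a unit at `t`, so `g̃₀` is one order smoother than required.

Conversely, let `D` be the jump of `g̃₀ ∈ S̃(p)` at `t`, and let `a` and `b` be the values of
`β^(L) / α^(L)` and `β^(R) / α^(R)` at `t`. Take `g̃₁ = q h₁` and `g̃₂ = q² h₂`, where `h₁` has the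
jump `-(a + b) / 2 * D′` and `h₂` the jump `a b D″`. The division by `q` in the second condition
then cancels, and the two combinations acquire the jumps `(β^(S) - (a + b) / 2 * α^(S)) D′` and
`(β^(S) - a α^(S)) (β^(S) - b α^(S)) D″`. If `β(t) ≠ 0`, one of the last two linear factors vanishes
at `t`, making up for one of the two orders lost by `D″`. If `β(t) = 0`, then `a = b` and all the
linear factors vanish at `t`.

The dimension is read off from the free parameters of a spline: its initial piece, and the quotient
of each jump by the prescribed power of `X - t`.
-/

section Polynomial

variable {R : Type*} [CommRing R]

theorem pow_succ_dvd_sub_iff_eval_iterate_derivative_eq [IsDomain R] [CharZero R]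
    {P Q : R[X]} {t : R} {n : ℕ} :
    (X - C t) ^ (n + 1) ∣ Q - P ↔
      ∀ j ≤ n, (derivative^[j] P).eval t = (derivative^[j] Q).eval t := by
  rcases eq_or_ne Q P with rfl | hne
  · simp
  · rw [← le_rootMultiplicity_iff (sub_ne_zero.2 hne), Nat.succ_le_iff,
      lt_rootMultiplicity_iff_isRoot_iterate_derivative (sub_ne_zero.2 hne)]
    simp only [iterate_derivative_sub, IsRoot.def, eval_sub, sub_eq_zero]
    exact forall₂_congr fun _ _ => eq_comm

theorem isRoot_of_pow_dvd {D : R[X]} {t : R} {n : ℕ} (hn : n ≠ 0) (h : (X - C t) ^ n ∣ D) :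
    D.IsRoot t :=
  dvd_iff_isRoot.1 ((dvd_pow_self _ hn).trans h)

theorem pow_succ_dvd_of_pow_dvd_derivative [IsDomain R] [CharZero R] {D : R[X]} {t : R} {n : ℕ}
    (hroot : D.IsRoot t) (h : (X - C t) ^ n ∣ derivative D) : (X - C t) ^ (n + 1) ∣ D := by
  rw [← sub_zero D, pow_succ_dvd_sub_iff_eval_iterate_derivative_eq]
  rintro (_ | j) hj
  · simpa using hroot.symm
  · have hdvd := pow_sub_dvd_iterate_derivative_of_pow_dvd j h
    simpa using (isRoot_of_pow_dvd (by omega) hdvd).symm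

theorem pow_succ_dvd_of_pow_dvd_mul_derivative [IsDomain R] [CharZero R] {D M : R[X]} {t : R}
    {n : ℕ} (hroot : D.IsRoot t) (hM : ¬M.IsRoot t) (h : (X - C t) ^ n ∣ M * derivative D) :
    (X - C t) ^ (n + 1) ∣ D :=
  pow_succ_dvd_of_pow_dvd_derivative hroot <|
    (prime_X_sub_C t).pow_dvd_of_dvd_mul_left n (dvd_iff_isRoot.not.2 hM) h

theorem pow_succ_dvd_sub_mul_derivative {K : Type*} [Field K] [CharZero K] [DecidableEq K]
    {t a b : K} {α β D : K[X]} {n : ℕ}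
    (hβ : β.eval t = a * α.eval t ∨ β.eval t = b * α.eval t)
    (hD : (X - C t) ^ ((if a = b then n else n + 1) + 1) ∣ D) :
    (X - C t) ^ (n + 1) ∣ (β - C ((a + b) / 2) * α) * derivative D := by
  have hD' := pow_sub_one_dvd_derivative_of_pow_dvd hD
  rw [Nat.add_sub_cancel] at hD'
  split_ifs at hD' with hab
  · subst hab
    have hroot : X - C t ∣ β - C ((a + a) / 2) * α := by
      rw [dvd_iff_isRoot]
      simpa [sub_eq_zero] using hβ
    rw [pow_succ']
    exact mul_dvd_mul hroot hD'
  · exact hD'.mul_left _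

theorem pow_succ_dvd_sub_mul_sub_mul_derivative_derivative [IsDomain R] [DecidableEq R]
    {t a b : R} {α β D : R[X]} {n : ℕ}
    (hβ : β.eval t = a * α.eval t ∨ β.eval t = b * α.eval t)
    (hD : (X - C t) ^ ((if a = b then n else n + 1) + 1) ∣ D) :
    (X - C t) ^ (n + 1) ∣
      (β - C a * α) * (β - C b * α) * derivative (derivative D) := by
  have hD'' := pow_sub_one_dvd_derivative_of_pow_dvd (pow_sub_one_dvd_derivative_of_pow_dvd hD)
  rw [Nat.add_sub_cancel] at hD''
  split_ifs at hD'' with hab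
  · subst hab
    have hroot : X - C t ∣ β - C a * α := by
      rw [dvd_iff_isRoot]
      simpa [sub_eq_zero] using hβ
    refine (pow_dvd_pow _ (by omega : n + 1 ≤ 2 + (n - 1))).trans ?_
    rw [pow_add, sq]
    exact mul_dvd_mul (mul_dvd_mul hroot hroot) hD''
  · have hroot : X - C t ∣ (β - C a * α) * (β - C b * α) := by
      rw [dvd_iff_isRoot]
      simpa [sub_eq_zero] using hβ
    rw [pow_succ']
    exact mul_dvd_mul hroot hD''

theorem det_eval_eq_zero_iff_div_eq_div {K : Type*} [Field K] {α₁ α₂ β₁ β₂ : K[X]} {t : K}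
    (h₁ : α₁.eval t ≠ 0) (h₂ : α₂.eval t ≠ 0) :
    (α₁ * β₂ - α₂ * β₁).eval t = 0 ↔ β₁.eval t / α₁.eval t = β₂.eval t / α₂.eval t := by
  rw [div_eq_div_iff h₁ h₂, eval_sub, eval_mul, eval_mul, sub_eq_zero, eq_comm,
    mul_comm (α₂.eval t), mul_comm (α₁.eval t)]

theorem mul_mem_degreeLT_iff_of_monic {M G : R[X]} (hM : M.Monic) {n : ℕ} :
    M * G ∈ degreeLT R n ↔ G ∈ degreeLT R (n - M.natDegree) := by
  nontriviality R
  rw [mem_degreeLT, mem_degreeLT, mul_comm, hM.degree_mul, degree_eq_natDegree hM.ne_zero]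
  rcases eq_or_ne G 0 with rfl | hG
  · simp
  · rw [degree_eq_natDegree hG]
    norm_cast
    omega

theorem pow_succ_mul_mem_degreeLT_succ_iff {t : R} {G : R[X]} {m n : ℕ} :
    (X - C t) ^ (m + 1) * G ∈ degreeLT R (n + 1) ↔ G ∈ degreeLT R (n - m) := by
  nontriviality R
  rw [mul_mem_degreeLT_iff_of_monic ((monic_X_sub_C t).pow (m + 1)),
    (monic_X_sub_C t).natDegree_pow, natDegree_X_sub_C, mul_one, Nat.add_sub_add_right]

theorem natDegree_le_iff_mem_degreeLT {R : Type*} [Semiring R] {P : R[X]} {n : ℕ} :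
    P.natDegree ≤ n ↔ P ∈ degreeLT R (n + 1) := by
  rw [degreeLT_succ_eq_degreeLE, mem_degreeLE, natDegree_le_iff_degree_le]

theorem finrank_degreeLT [Nontrivial R] (n : ℕ) : Module.finrank R (degreeLT R n) = n := by
  simpa using Module.finrank_eq_card_basis (degreeLT.basis R n)

end Polynomial

/-- `τ 0 < τ 1 < ⋯ < τ (k + 1)` is a partition of `[a, b]` with interior knots `τ 1, …, τ k`;
the values of `τ` beyond `k + 1` are irrelevant. -/
structure IsKnotSequence (k : ℕ) (τ : ℕ → ℝ) (a b : ℝ) : Prop where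
  left : τ 0 = a
  right : τ (k + 1) = b
  strictMonoOn : StrictMonoOn τ (Iic (k + 1))

namespace IsKnotSequence

variable {k : ℕ} {τ : ℕ → ℝ} {a b : ℝ}

theorem lt_succ (hτ : IsKnotSequence k τ a b) {i : ℕ} (hi : i ≤ k) : τ i < τ (i + 1) :=
  hτ.strictMonoOn (mem_Iic.2 (by omega)) (mem_Iic.2 (by omega)) i.lt_succ_self

theorem Icc_subset (hτ : IsKnotSequence k τ a b) {i : ℕ} (hi : i ≤ k) :
    Icc (τ i) (τ (i + 1)) ⊆ Icc a b := by
  rw [← hτ.left, ← hτ.right]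
  exact Icc_subset_Icc
    (hτ.strictMonoOn.monotoneOn (mem_Iic.2 (by omega)) (mem_Iic.2 (by omega)) i.zero_le)
    (hτ.strictMonoOn.monotoneOn (mem_Iic.2 (by omega)) (mem_Iic.2 (by omega)) (by omega))

theorem mem_Icc (hτ : IsKnotSequence k τ a b) {i : ℕ} (hi : i ≤ k) : τ i ∈ Icc a b :=
  hτ.Icc_subset hi (left_mem_Icc.2 (hτ.lt_succ hi).le)

end IsKnotSequence

/-- `f` is the piecewise polynomial function with pieces `P 0, …, P k`, the piece `P i` being
taken on the closed interval `[τ i, τ (i + 1)]`. -/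
def HasPieces (k : ℕ) (τ : ℕ → ℝ) (P : ℕ → ℝ[X]) (f : ℝ → ℝ) : Prop :=
  ∀ i ≤ k, ∀ x ∈ Icc (τ i) (τ (i + 1)), f x = (P i).eval x

/-- The jump `P (i + 1) - P i` of the pieces vanishes to order `n (i + 1)` at the interior knot
`τ (i + 1)`, so order `n + 1` amounts to the agreement of the derivatives of orders `0, …, n`. -/
def HasJumpOrder (k : ℕ) (τ : ℕ → ℝ) (n : ℕ → ℕ) (P : ℕ → ℝ[X]) : Prop :=
  ∀ i < k, (X - C (τ (i + 1))) ^ n (i + 1) ∣ P (i + 1) - P i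

theorem isSplineOn_iff_exists_hasPieces {k : ℕ} {τ : ℕ → ℝ} {d : ℕ} {s : ℕ → ℕ} {f : ℝ → ℝ} :
    IsSplineOn k τ d s f ↔ ∃ P : ℕ → ℝ[X], (∀ i ≤ k, (P i).natDegree ≤ d) ∧
      HasPieces k τ P f ∧ HasJumpOrder k τ (fun i => s i + 1) P := by
  refine exists_congr fun P => and_congr_right fun _ => and_congr_right fun _ => ?_
  constructor
  · intro h i hi
    exact pow_succ_dvd_sub_iff_eval_iterate_derivative_eq.2 (h (i + 1) (by omega) hi)
  · rintro h (_ | i) h1 hi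
    · omega
    · exact pow_succ_dvd_sub_iff_eval_iterate_derivative_eq.1 (h i hi)

namespace HasJumpOrder

variable {k : ℕ} {τ : ℕ → ℝ} {m n : ℕ → ℕ} {P : ℕ → ℝ[X]}

theorem mono (hP : HasJumpOrder k τ n P) (hmn : ∀ i, m i ≤ n i) : HasJumpOrder k τ m P :=
  fun i hi => (pow_dvd_pow _ (hmn (i + 1))).trans (hP i hi)

theorem derivative (hP : HasJumpOrder k τ n P) :
    HasJumpOrder k τ (fun i => n i - 1) (fun i => derivative (P i)) := fun i hi => by
  simpa only [derivative_sub] using pow_sub_one_dvd_derivative_of_pow_dvd (hP i hi)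

theorem eval_succ_eq (hP : HasJumpOrder k τ n P) (hn : ∀ i, n i ≠ 0) {i : ℕ} (hi : i < k) :
    (P (i + 1)).eval (τ (i + 1)) = (P i).eval (τ (i + 1)) := by
  simpa [sub_eq_zero] using isRoot_of_pow_dvd (hn (i + 1)) (hP i hi)

end HasJumpOrder

/-- The index `i ≤ k` of the last knot `τ i ≤ x`, with default value `0` when there is none. -/
def pieceIndex (k : ℕ) (τ : ℕ → ℝ) (x : ℝ) : ℕ :=
  Nat.findGreatest (fun i => τ i ≤ x) k

/-- The function on the line whose value at `x` is that of the piece `P (pieceIndex k τ x)`. It is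
linear in the pieces and, when these agree at the interior knots, has them as pieces. -/
def glue (k : ℕ) (τ : ℕ → ℝ) : (ℕ → ℝ[X]) →ₗ[ℝ] ℝ → ℝ :=
  LinearMap.pi fun x => leval x ∘ₗ LinearMap.proj (pieceIndex k τ x)

section Glue

variable {k : ℕ} {τ : ℕ → ℝ} {a b : ℝ} {n : ℕ → ℕ} {P : ℕ → ℝ[X]} {f g : ℝ → ℝ}

theorem glue_apply (x : ℝ) : glue k τ P x = (P (pieceIndex k τ x)).eval x := rfl

theorem pieceIndex_le (k : ℕ) (τ : ℕ → ℝ) (x : ℝ) : pieceIndex k τ x ≤ k := Nat.findGreatest_le k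

theorem mem_Icc_pieceIndex (hτ : IsKnotSequence k τ a b) {x : ℝ} (hx : x ∈ Icc a b) :
    x ∈ Icc (τ (pieceIndex k τ x)) (τ (pieceIndex k τ x + 1)) := by
  refine ⟨Nat.findGreatest_spec (P := fun i => τ i ≤ x) k.zero_le (hτ.left.trans_le hx.1), ?_⟩
  rcases (pieceIndex_le k τ x).lt_or_eq with hlt | heq
  · exact (not_le.1 (Nat.findGreatest_is_greatest (P := fun i => τ i ≤ x)
      (Nat.lt_succ_self _) hlt)).le
  · rw [heq, hτ.right]
    exact hx.2

theorem pieceIndex_eq_or_eq_succ (hτ : IsKnotSequence k τ a b) {i : ℕ} (hi : i ≤ k) {x : ℝ}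
    (hx : x ∈ Icc (τ i) (τ (i + 1))) :
    pieceIndex k τ x = i ∨ (pieceIndex k τ x = i + 1 ∧ x = τ (i + 1)) := by
  have hle : i ≤ pieceIndex k τ x := Nat.le_findGreatest hi hx.1
  have hspec : τ (pieceIndex k τ x) ≤ x :=
    Nat.findGreatest_spec (P := fun i => τ i ≤ x) hi hx.1
  have hk := pieceIndex_le k τ x
  have hle_succ : pieceIndex k τ x ≤ i + 1 :=
    (hτ.strictMonoOn.le_iff_le (mem_Iic.2 (by omega)) (mem_Iic.2 (by omega))).1
      (hspec.trans hx.2)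
  rcases hle.eq_or_lt with heq | hlt
  · exact .inl heq.symm
  · have heq : pieceIndex k τ x = i + 1 := by omega
    exact .inr ⟨heq, le_antisymm hx.2 (heq ▸ hspec)⟩

theorem hasPieces_glue (hτ : IsKnotSequence k τ a b) (hP : HasJumpOrder k τ n P)
    (hn : ∀ i, n i ≠ 0) : HasPieces k τ P (glue k τ P) := by
  intro i hi x hx
  rw [glue_apply]
  rcases pieceIndex_eq_or_eq_succ hτ hi hx with hidx | ⟨hidx, rfl⟩
  · rw [hidx]
  · rw [hidx]
    exact hP.eval_succ_eq hn (hidx.symm.trans_le (pieceIndex_le k τ _))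

namespace HasPieces

theorem eqOn_glue (hτ : IsKnotSequence k τ a b) (hf : HasPieces k τ P f) :
    EqOn f (glue k τ P) (Icc a b) :=
  fun x hx => hf _ (pieceIndex_le k τ x) x (mem_Icc_pieceIndex hτ hx)

theorem congr (hτ : IsKnotSequence k τ a b) (hf : HasPieces k τ P f) (hfg : EqOn f g (Icc a b)) :
    HasPieces k τ P g :=
  fun i hi x hx => (hfg (hτ.Icc_subset hi hx)).symm.trans (hf i hi x hx)

theorem hasDerivWithinAt (hτ : IsKnotSequence k τ a b) (hf : HasPieces k τ P f)
    (hg : HasPieces k τ (fun i => derivative (P i)) g) (x : ℝ) :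
    HasDerivWithinAt f (g x) (Icc a b) x := by
  have on_piece {i : ℕ} (hi : i ≤ k) :
      HasDerivWithinAt f (g x) (Icc (τ i) (τ (i + 1))) x := by
    by_cases hx : x ∈ Icc (τ i) (τ (i + 1))
    · rw [hg i hi x hx]
      exact ((P i).hasDerivAt x).hasDerivWithinAt.congr (hf i hi) (hf i hi x hx)
    · exact HasFDerivWithinAt.of_notMem_closure (by rwa [isClosed_Icc.closure_eq])
  have on_initial (i : ℕ) (hi : i ≤ k) : HasDerivWithinAt f (g x) (Icc (τ 0) (τ (i + 1))) x := by
    induction i with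
    | zero => exact on_piece hi
    | succ i ih =>
      have hmono : τ 0 ≤ τ (i + 1) :=
        hτ.strictMonoOn.monotoneOn (mem_Iic.2 (by omega)) (mem_Iic.2 (by omega)) (by omega)
      rw [← Icc_union_Icc_eq_Icc hmono (hτ.lt_succ hi).le]
      exact (ih (by omega)).union (on_piece hi)
  simpa only [hτ.left, hτ.right] using on_initial k le_rfl

theorem differentiableOn (hτ : IsKnotSequence k τ a b) (hf : HasPieces k τ P f)
    (hP : HasJumpOrder k τ n P) (hn : ∀ i, 2 ≤ n i) : DifferentiableOn ℝ f (Icc a b) :=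
  have hglue := hasPieces_glue hτ hP.derivative fun i => by have := hn i; omega
  fun x _ => (hf.hasDerivWithinAt hτ hglue x).differentiableWithinAt

theorem derivWithin (hτ : IsKnotSequence k τ a b) (hf : HasPieces k τ P f)
    (hdiff : DifferentiableOn ℝ f (Icc a b)) :
    HasPieces k τ (fun i => derivative (P i)) (derivWithin f (Icc a b)) := by
  intro i hi x hx
  have hglobal := (hdiff x (hτ.Icc_subset hi hx)).hasDerivWithinAt.mono (hτ.Icc_subset hi)
  have hpiece : HasDerivWithinAt f ((derivative (P i)).eval x) (Icc (τ i) (τ (i + 1))) x :=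
    ((P i).hasDerivAt x).hasDerivWithinAt.congr (hf i hi) (hf i hi x hx)
  exact (uniqueDiffOn_Icc (hτ.lt_succ hi) x hx).eq_deriv _ hglobal hpiece

theorem unique (hτ : IsKnotSequence k τ a b) {Q : ℕ → ℝ[X]} (hP : HasPieces k τ P f)
    (hQ : HasPieces k τ Q f) {i : ℕ} (hi : i ≤ k) : P i = Q i :=
  eq_of_infinite_eval_eq _ _ ((Icc_infinite (hτ.lt_succ hi)).mono fun x hx =>
    (hP i hi x hx).symm.trans (hQ i hi x hx))

end HasPieces

end Glue

theorem IsSplineOn.congr {k : ℕ} {τ : ℕ → ℝ} {a b : ℝ} {d : ℕ} {s : ℕ → ℕ} {f g : ℝ → ℝ}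
    (hτ : IsKnotSequence k τ a b) (hf : IsSplineOn k τ d s f) (hfg : EqOn f g (Icc a b)) :
    IsSplineOn k τ d s g := by
  rw [isSplineOn_iff_exists_hasPieces] at hf ⊢
  obtain ⟨P, hdeg, hpieces, hjump⟩ := hf
  exact ⟨P, hdeg, hpieces.congr hτ hfg, hjump⟩

/-- The pieces that start from `0` and whose jump at the knot of index `j` is `c j` times the jump
of `P`. -/
def scaleJumps (c : ℕ → ℝ) (P : ℕ → ℝ[X]) (i : ℕ) : ℝ[X] :=
  ∑ j ∈ Finset.range i, C (c (j + 1)) * (P (j + 1) - P j)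

section ScaleJumps

variable {k : ℕ} {τ : ℕ → ℝ} {n : ℕ → ℕ} {c : ℕ → ℝ} {P : ℕ → ℝ[X]}

theorem scaleJumps_succ (c : ℕ → ℝ) (P : ℕ → ℝ[X]) (i : ℕ) :
    scaleJumps c P (i + 1) = scaleJumps c P i + C (c (i + 1)) * (P (i + 1) - P i) :=
  Finset.sum_range_succ _ i

theorem derivative_scaleJumps (c : ℕ → ℝ) (P : ℕ → ℝ[X]) (i : ℕ) :
    derivative (scaleJumps c P i) = scaleJumps c (fun j => derivative (P j)) i := by
  simp only [scaleJumps, derivative_sum, derivative_C_mul, derivative_sub]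

theorem natDegree_scaleJumps_le {d i : ℕ} (hP : ∀ j ≤ i, (P j).natDegree ≤ d) :
    (scaleJumps c P i).natDegree ≤ d := by
  refine natDegree_sum_le_of_forall_le _ _ fun j hj => (natDegree_C_mul_le _ _).trans ?_
  rw [Finset.mem_range] at hj
  exact natDegree_sub_le_of_le (hP _ hj) (hP _ hj.le) |>.trans (max_self d).le

theorem HasJumpOrder.scaleJumps (hP : HasJumpOrder k τ n P) :
    HasJumpOrder k τ n (scaleJumps c P) := fun i hi => by
  rw [scaleJumps_succ, add_sub_cancel_left]
  exact (hP i hi).mul_left _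

end ScaleJumps

/-- At every interior knot `τ i` the polynomial `β` takes the value `a i * α` or `b i * α`. With
`a` and `b` the quotients `β / α` of the two sides, this is the only property of a single side
that matters below. -/
def HasSlopes (k : ℕ) (τ : ℕ → ℝ) (a b : ℕ → ℝ) (α β : ℝ[X]) : Prop :=
  ∀ i < k, β.eval (τ (i + 1)) = a (i + 1) * α.eval (τ (i + 1)) ∨
    β.eval (τ (i + 1)) = b (i + 1) * α.eval (τ (i + 1))

section Combinations

variable {k : ℕ} {τ : ℕ → ℝ} {p r : ℕ} {a b : ℕ → ℝ} {α β : ℝ[X]} {P : ℕ → ℝ[X]}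

theorem hasJumpOrder_first_combination
    (hβ : HasSlopes k τ a b α β)
    (hP : HasJumpOrder k τ (fun i => (if a i = b i then r else r + 1) + 1) P) :
    HasJumpOrder k τ (fun _ => r + 1) fun i =>
      α * scaleJumps (fun i => -((a i + b i) / 2)) (fun i => derivative (P i)) i +
        β * derivative (P i) := by
  intro i hi
  convert pow_succ_dvd_sub_mul_derivative (hβ i hi) (hP i hi) using 1
  beta_reduce
  rw [scaleJumps_succ, C_neg, derivative_sub]
  ring

theorem hasJumpOrder_second_combination
    (hβ : HasSlopes k τ a b α β)
    (hP : HasJumpOrder k τ (fun i => (if a i = b i then r else r + 1) + 1) P) :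
    HasJumpOrder k τ (fun _ => r + 1) fun i =>
      β ^ 2 * derivative (derivative (P i)) +
        C 2 * (α * β) * scaleJumps (fun i => -((a i + b i) / 2))
          (fun i => derivative (derivative (P i))) i +
        α ^ 2 * scaleJumps (fun i => a i * b i) (fun i => derivative (derivative (P i))) i := by
  intro i hi
  convert pow_succ_dvd_sub_mul_sub_mul_derivative_derivative (hβ i hi) (hP i hi) using 1
  have htwo : C 2 * C (-((a (i + 1) + b (i + 1)) / 2)) = -(C (a (i + 1)) + C (b (i + 1))) := by
    rw [← C_mul, ← C_add, ← C_neg]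
    congr 1
    ring
  beta_reduce
  rw [scaleJumps_succ, scaleJumps_succ, C_mul, derivative_sub, derivative_sub]
  linear_combination α * β *
    (derivative (derivative (P (i + 1))) - derivative (derivative (P i))) * htwo

theorem isSplineOn_first_combination {f₁ h : ℝ → ℝ} (hp : 1 ≤ p)
    (hdα : α.natDegree ≤ 1) (hdβ : β.natDegree ≤ 1)
    (hβ : HasSlopes k τ a b α β)
    (hP : HasJumpOrder k τ (fun i => (if a i = b i then r else r + 1) + 1) P)
    (hdeg : ∀ i ≤ k, (P i).natDegree ≤ p)
    (hf₁ : HasPieces k τ (fun i => derivative (P i)) f₁)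
    (hh : HasPieces k τ
      (scaleJumps (fun i => -((a i + b i) / 2)) fun i => derivative (P i)) h) :
    IsSplineOn k τ p (fun _ => r) fun v => α.eval v * h v + β.eval v * f₁ v := by
  have hdeg' : ∀ i ≤ k, (derivative (P i)).natDegree ≤ p - 1 := fun i hi =>
    (natDegree_derivative_le _).trans (Nat.sub_le_sub_right (hdeg i hi) 1)
  refine isSplineOn_iff_exists_hasPieces.2 ⟨_, fun i hi => ?_, fun i hi x hx => ?_,
    hasJumpOrder_first_combination hβ hP⟩
  · have hH := natDegree_scaleJumps_le (c := fun i => -((a i + b i) / 2))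
      fun j (hj : j ≤ i) => hdeg' j (hj.trans hi)
    exact natDegree_add_le_of_degree_le
      ((natDegree_mul_le_of_le hdα hH).trans (by omega))
      ((natDegree_mul_le_of_le hdβ (hdeg' i hi)).trans (by omega))
  · simp only [hh i hi x hx, hf₁ i hi x hx, eval_add, eval_mul]

theorem isSplineOn_second_combination {f₂ h₁ h₂ : ℝ → ℝ} (hp : 2 ≤ p)
    (hdα : α.natDegree ≤ 1) (hdβ : β.natDegree ≤ 1)
    (hβ : HasSlopes k τ a b α β)
    (hP : HasJumpOrder k τ (fun i => (if a i = b i then r else r + 1) + 1) P)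
    (hdeg : ∀ i ≤ k, (P i).natDegree ≤ p)
    (hf₂ : HasPieces k τ (fun i => derivative (derivative (P i))) f₂)
    (hh₁ : HasPieces k τ
      (scaleJumps (fun i => -((a i + b i) / 2)) fun i => derivative (derivative (P i))) h₁)
    (hh₂ : HasPieces k τ
      (scaleJumps (fun i => a i * b i) fun i => derivative (derivative (P i))) h₂) :
    IsSplineOn k τ p (fun _ => r) fun v =>
      β.eval v ^ 2 * f₂ v + 2 * (α.eval v * β.eval v) * h₁ v + α.eval v ^ 2 * h₂ v := by
  have hdeg'' : ∀ i ≤ k, (derivative (derivative (P i))).natDegree ≤ p - 2 := fun i hi =>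
    (natDegree_iterate_derivative (P i) 2).trans (Nat.sub_le_sub_right (hdeg i hi) 2)
  refine isSplineOn_iff_exists_hasPieces.2 ⟨_, fun i hi => ?_, fun i hi x hx => ?_,
    hasJumpOrder_second_combination hβ hP⟩
  · have hscale (c : ℕ → ℝ) := natDegree_scaleJumps_le (c := c)
      fun j (hj : j ≤ i) => hdeg'' j (hj.trans hi)
    refine natDegree_add_le_of_degree_le (natDegree_add_le_of_degree_le ?_ ?_) ?_
    · exact (natDegree_mul_le_of_le (natDegree_pow_le_of_le 2 hdβ) (hdeg'' i hi)).trans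
        (by omega)
    · exact (natDegree_mul_le_of_le ((natDegree_C_mul_le _ _).trans
        (natDegree_mul_le_of_le hdα hdβ)) (hscale _)).trans (by omega)
    · exact (natDegree_mul_le_of_le (natDegree_pow_le_of_le 2 hdα) (hscale _)).trans (by omega)
  · simp only [hf₂ i hi x hx, hh₁ i hi x hx, hh₂ i hi x hx, eval_add, eval_mul, eval_pow, eval_C]

end Combinations

section Gamma0

variable {k : ℕ} {τ : ℕ → ℝ} {p r : ℕ}

theorem HasJumpOrder.det_mul {x₀ x₁ : ℝ} {n : ℕ → ℕ} {A₁ A₂ B₁ B₂ : ℝ[X]} {Q L₁ L₂ : ℕ → ℝ[X]}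
    {f g : ℝ → ℝ} (hτ : IsKnotSequence k τ x₀ x₁) (hQ : HasPieces k τ Q f)
    (hpieces₁ : HasPieces k τ L₁ fun v => A₁.eval v * g v + B₁.eval v * f v)
    (hpieces₂ : HasPieces k τ L₂ fun v => A₂.eval v * g v + B₂.eval v * f v)
    (hL₁ : HasJumpOrder k τ n L₁) (hL₂ : HasJumpOrder k τ n L₂) :
    HasJumpOrder k τ n fun i => (A₁ * B₂ - A₂ * B₁) * Q i := by
  have helim : ∀ i ≤ k, (A₁ * B₂ - A₂ * B₁) * Q i = A₁ * L₂ i - A₂ * L₁ i := by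
    refine fun i hi => HasPieces.unique (k := k) (τ := τ)
      (P := fun i => (A₁ * B₂ - A₂ * B₁) * Q i) (Q := fun i => A₁ * L₂ i - A₂ * L₁ i)
      (f := fun v => (A₁ * B₂ - A₂ * B₁).eval v * f v) hτ (fun i hi x hx => ?_)
      (fun i hi x hx => ?_) hi
    · simp only [hQ i hi x hx, eval_mul]
    · simp only [eval_sub, eval_mul, ← hpieces₁ i hi x hx, ← hpieces₂ i hi x hx]
      ring
  intro i hi
  beta_reduce
  rw [helim (i + 1) hi, helim i hi.le]
  convert ((hL₂ i hi).mul_left A₁).sub ((hL₁ i hi).mul_left A₂) using 1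
  ring

theorem Gamma0_subset_splineSpace (hτ : IsKnotSequence k τ 0 1) (αtL αtR βL βR q : ℝ[X]) :
    Gamma0 k τ p r αtL αtR βL βR q ⊆ SplineSpace k τ p fun i =>
      if (αtL * q * βR - αtR * q * βL).eval (τ i) = 0 then r else r + 1 := by
  rintro g ⟨g₀, g₁, g₂, hg, hdiff, -, -, hspline, hsides⟩
  have hL := (hsides αtL βL (.inl rfl)).1
  have hR := (hsides αtR βR (.inr rfl)).1
  rw [isSplineOn_iff_exists_hasPieces] at hspline hL hR
  obtain ⟨P, hdeg, hpieces, hP⟩ := hspline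
  obtain ⟨L, -, hpiecesL, hL⟩ := hL
  obtain ⟨R, -, hpiecesR, hR⟩ := hR
  have hdet := HasJumpOrder.det_mul hτ (hpieces.derivWithin hτ hdiff) hpiecesL hpiecesR hL hR
  refine ⟨g₀, isSplineOn_iff_exists_hasPieces.2 ⟨P, hdeg, hpieces, fun i hi => ?_⟩, hg⟩
  beta_reduce
  split_ifs with hβ
  · exact hP i hi
  · refine pow_succ_dvd_of_pow_dvd_mul_derivative (M := αtL * βR - αtR * βL)
      (isRoot_of_pow_dvd r.succ_ne_zero (hP i hi)) (fun hroot => hβ ?_) ?_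
    · rw [show αtL * q * βR - αtR * q * βL = q * (αtL * βR - αtR * βL) by ring, eval_mul,
        hroot.eq_zero, mul_zero]
    · simpa only [derivative_sub, mul_sub] using hdet i hi

theorem derivWithin_eval_mul {q : ℝ[X]} {h : ℝ → ℝ} {s : Set ℝ} {x : ℝ}
    (hs : UniqueDiffWithinAt ℝ s x) (hh : DifferentiableWithinAt ℝ h s x) :
    derivWithin (fun v => q.eval v * h v) s x =
      (derivative q).eval x * h x + q.eval x * derivWithin h s x :=
  ((q.hasDerivAt x).hasDerivWithinAt.mul hh.hasDerivWithinAt).derivWithin hs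

theorem mem_Gamma0_of_hasSlopes (hτ : IsKnotSequence k τ 0 1) (hp : 2 ≤ p) (hr : 2 ≤ r)
    {αtL αtR βL βR q : ℝ[X]} (hdL : (αtL * q).natDegree ≤ 1) (hdR : (αtR * q).natDegree ≤ 1)
    (hdβL : βL.natDegree ≤ 1) (hdβR : βR.natDegree ≤ 1) (hq : ∀ v ∈ Icc (0 : ℝ) 1, q.eval v ≠ 0)
    {a b : ℕ → ℝ} (hL : HasSlopes k τ a b (αtL * q) βL) (hR : HasSlopes k τ a b (αtR * q) βR)
    {P : ℕ → ℝ[X]} (hdeg : ∀ i ≤ k, (P i).natDegree ≤ p)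
    (hP : HasJumpOrder k τ (fun i => (if a i = b i then r else r + 1) + 1) P)
    {f : ℝ → ℝ} (hf : HasPieces k τ P f) :
    (fun x : Icc (0 : ℝ) 1 => f x) ∈ Gamma0 k τ p r αtL αtR βL βR q := by
  have hP₀ : HasJumpOrder k τ (fun _ => r + 1) P := hP.mono fun i => by split_ifs <;> omega
  have hP₁ := hP₀.derivative
  have hP₂ := hP₁.derivative
  have hdiff := hf.differentiableOn hτ hP₀ fun _ => by omega
  have hf₁ := hf.derivWithin hτ hdiff
  have hdiff₁ := hf₁.differentiableOn hτ hP₁ fun _ => hr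
  have hf₂ := hf₁.derivWithin hτ hdiff₁
  set c : ℕ → ℝ := fun i => -((a i + b i) / 2)
  set h := glue k τ (scaleJumps c fun i => derivative (P i))
  set h₂ := glue k τ (scaleJumps (fun i => a i * b i) fun i => derivative (derivative (P i)))
  have hh := hasPieces_glue hτ (hP₁.scaleJumps (c := c)) fun _ => by omega
  have hdiffh : DifferentiableOn ℝ h (Icc 0 1) := hh.differentiableOn hτ hP₁.scaleJumps fun _ => hr
  have hh₁ := hh.derivWithin hτ hdiffh
  simp only [derivative_scaleJumps] at hh₁
  have hh₂ := hasPieces_glue hτ (hP₂.scaleJumps (c := fun i => a i * b i)) fun _ => by omega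
  refine ⟨f, fun v => q.eval v * h v, fun v => q.eval v ^ 2 * h₂ v, fun _ => rfl, hdiff, hdiff₁,
    q.differentiable.differentiableOn.mul hdiffh,
    isSplineOn_iff_exists_hasPieces.2 ⟨P, hdeg, hf, hP₀⟩, fun A B hAB => ?_⟩
  obtain ⟨hdA, hdB, hAB⟩ :
      (A * q).natDegree ≤ 1 ∧ B.natDegree ≤ 1 ∧ HasSlopes k τ a b (A * q) B := by
    rcases hAB with hAB | hAB <;> obtain ⟨rfl, rfl⟩ := Prod.mk.inj hAB
    exacts [⟨hdL, hdβL, hL⟩, ⟨hdR, hdβR, hR⟩]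
  constructor
  · refine (isSplineOn_first_combination (by omega) hdA hdB hAB hP hdeg hf₁ hh).congr hτ
      fun x _ => ?_
    rw [eval_mul]
    ring
  · refine (isSplineOn_second_combination hp hdA hdB hAB hP hdeg hf₂ hh₁ hh₂).congr hτ
      fun x hx => ?_
    have := hq x hx
    simp only [derivWithin_eval_mul (uniqueDiffOn_Icc zero_lt_one x hx) (hdiffh x hx), eval_mul]
    field_simp
    ring

theorem splineSpace_subset_Gamma0 (hτ : IsKnotSequence k τ 0 1) (hp : 2 ≤ p) (hr : 2 ≤ r)
    {αtL αtR βL βR q : ℝ[X]} (hdL : (αtL * q).natDegree ≤ 1) (hdR : (αtR * q).natDegree ≤ 1)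
    (hdβL : βL.natDegree ≤ 1) (hdβR : βR.natDegree ≤ 1)
    (hL : ∀ v ∈ Icc (0 : ℝ) 1, (αtL * q).eval v ≠ 0)
    (hR : ∀ v ∈ Icc (0 : ℝ) 1, (αtR * q).eval v ≠ 0) :
    (SplineSpace k τ p fun i =>
      if (αtL * q * βR - αtR * q * βL).eval (τ i) = 0 then r else r + 1) ⊆
        Gamma0 k τ p r αtL αtR βL βR q := by
  rintro g ⟨f, hf, hg⟩
  obtain ⟨P, hdeg, hpieces, hP⟩ := isSplineOn_iff_exists_hasPieces.1 hf
  obtain rfl : g = fun x : Icc (0 : ℝ) 1 => f x := funext hg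
  have hL' : ∀ i < k, (αtL * q).eval (τ (i + 1)) ≠ 0 := fun i hi => hL _ (hτ.mem_Icc hi)
  have hR' : ∀ i < k, (αtR * q).eval (τ (i + 1)) ≠ 0 := fun i hi => hR _ (hτ.mem_Icc hi)
  have hq : ∀ v ∈ Icc (0 : ℝ) 1, q.eval v ≠ 0 := fun v hv =>
    right_ne_zero_of_mul (eval_mul (p := αtL) (q := q) ▸ hL v hv)
  refine mem_Gamma0_of_hasSlopes hτ hp hr hdL hdR hdβL hdβR hq
    (a := fun i => βL.eval (τ i) / (αtL * q).eval (τ i))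
    (b := fun i => βR.eval (τ i) / (αtR * q).eval (τ i))
    (fun i hi => .inl (div_mul_cancel₀ _ (hL' i hi)).symm)
    (fun i hi => .inr (div_mul_cancel₀ _ (hR' i hi)).symm) hdeg (fun i hi => ?_) hpieces
  simpa only [det_eval_eq_zero_iff_div_eq_div (hL' i hi) (hR' i hi)] using hP i hi

end Gamma0

/-- The spline pieces with initial piece `u.1` and jump
`(X - τ (j + 1)) ^ (s (j + 1) + 1) * u.2 j` at each interior knot `τ (j + 1)`. The domain
parametrises the spline space bijectively; for `d ≤ s (j + 1)` the truncated bound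
`d - s (j + 1) = 0` rightly forces the jump to vanish. -/
def piecesOfJumps (k : ℕ) (τ : ℕ → ℝ) (d : ℕ) (s : ℕ → ℕ) :
    (degreeLT ℝ (d + 1) × ((j : Fin k) → degreeLT ℝ (d - s (j + 1)))) →ₗ[ℝ] ℕ → ℝ[X] :=
  LinearMap.pi fun i => (degreeLT ℝ (d + 1)).subtype.coprod <|
    ∑ j : Fin k with j.1 < i, LinearMap.mulLeft ℝ ((X - C (τ (j + 1))) ^ (s (j + 1) + 1)) ∘ₗ
      (degreeLT ℝ (d - s (j + 1))).subtype ∘ₗ LinearMap.proj j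

section Dimension

variable {k : ℕ} {τ : ℕ → ℝ} {d : ℕ} {s : ℕ → ℕ}

theorem piecesOfJumps_apply
    (u : degreeLT ℝ (d + 1) × ((j : Fin k) → degreeLT ℝ (d - s (j + 1)))) (i : ℕ) :
    piecesOfJumps k τ d s u i = u.1 +
      ∑ j : Fin k with j.1 < i, (X - C (τ (j + 1))) ^ (s (j + 1) + 1) * (u.2 j : ℝ[X]) := by
  simp [piecesOfJumps]

theorem piecesOfJumps_zero
    (u : degreeLT ℝ (d + 1) × ((j : Fin k) → degreeLT ℝ (d - s (j + 1)))) :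
    piecesOfJumps k τ d s u 0 = u.1 := by
  simp [piecesOfJumps_apply]

theorem piecesOfJumps_succ
    (u : degreeLT ℝ (d + 1) × ((j : Fin k) → degreeLT ℝ (d - s (j + 1)))) (j : Fin k) :
    piecesOfJumps k τ d s u (j + 1) = piecesOfJumps k τ d s u j +
      (X - C (τ (j + 1))) ^ (s (j + 1) + 1) * (u.2 j : ℝ[X]) := by
  have hfilter : ({i : Fin k | i.1 < j + 1} : Finset (Fin k)) =
      insert j ({i : Fin k | i.1 < j} : Finset (Fin k)) := by
    ext i
    simp only [Finset.mem_filter_univ, Finset.mem_insert, Fin.ext_iff]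
    omega
  rw [piecesOfJumps_apply, piecesOfJumps_apply, hfilter, Finset.sum_insert (by simp)]
  ring

theorem hasJumpOrder_piecesOfJumps
    (u : degreeLT ℝ (d + 1) × ((j : Fin k) → degreeLT ℝ (d - s (j + 1)))) :
    HasJumpOrder k τ (fun i => s i + 1) (piecesOfJumps k τ d s u) := fun i hi => by
  rw [piecesOfJumps_succ u ⟨i, hi⟩, add_sub_cancel_left]
  exact dvd_mul_right _ _

theorem piecesOfJumps_mem_degreeLT
    (u : degreeLT ℝ (d + 1) × ((j : Fin k) → degreeLT ℝ (d - s (j + 1)))) (i : ℕ) :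
    piecesOfJumps k τ d s u i ∈ degreeLT ℝ (d + 1) := by
  rw [piecesOfJumps_apply]
  exact add_mem u.1.2 (sum_mem fun j _ => pow_succ_mul_mem_degreeLT_succ_iff.2 (u.2 j).2)

theorem exists_piecesOfJumps_eq {P : ℕ → ℝ[X]} (hdeg : ∀ i ≤ k, P i ∈ degreeLT ℝ (d + 1))
    (hP : HasJumpOrder k τ (fun i => s i + 1) P) :
    ∃ u, ∀ i ≤ k, piecesOfJumps k τ d s u i = P i := by
  have hquot (j : Fin k) : ∃ G : degreeLT ℝ (d - s (j + 1)),
      P (j + 1) - P j = (X - C (τ (j + 1))) ^ (s (j + 1) + 1) * (G : ℝ[X]) := by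
    obtain ⟨G, hG⟩ := hP j j.2
    have hmem := hG ▸ sub_mem (hdeg _ j.2) (hdeg _ j.2.le)
    exact ⟨⟨G, pow_succ_mul_mem_degreeLT_succ_iff.1 hmem⟩, hG⟩
  choose G hG using hquot
  refine ⟨(⟨P 0, hdeg 0 k.zero_le⟩, G), fun i hi => ?_⟩
  induction i with
  | zero => exact piecesOfJumps_zero _
  | succ i ih =>
    rw [piecesOfJumps_succ _ ⟨i, hi⟩, ih (by omega), ← hG ⟨i, hi⟩]
    ring

/-- The linear map that sends an initial piece and jumps to the resulting spline on `[0, 1]`. -/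
def splineOfJumps (k : ℕ) (τ : ℕ → ℝ) (d : ℕ) (s : ℕ → ℕ) :
    (degreeLT ℝ (d + 1) × ((j : Fin k) → degreeLT ℝ (d - s (j + 1)))) →ₗ[ℝ]
      Icc (0 : ℝ) 1 → ℝ :=
  LinearMap.funLeft ℝ ℝ Subtype.val ∘ₗ glue k τ ∘ₗ piecesOfJumps k τ d s

theorem splineOfJumps_apply
    (u : degreeLT ℝ (d + 1) × ((j : Fin k) → degreeLT ℝ (d - s (j + 1)))) (x : Icc (0 : ℝ) 1) :
    splineOfJumps k τ d s u x = glue k τ (piecesOfJumps k τ d s u) x := rfl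

theorem splineOfJumps_injective (hτ : IsKnotSequence k τ 0 1) :
    Function.Injective (splineOfJumps k τ d s) := by
  rw [injective_iff_map_eq_zero]
  intro u hu
  have hglue := hasPieces_glue hτ (hasJumpOrder_piecesOfJumps u) fun i => (s i).succ_ne_zero
  have hzero : HasPieces k τ (piecesOfJumps k τ d s u) 0 :=
    hglue.congr hτ fun x hx => congrFun hu ⟨x, hx⟩
  have hpieces : ∀ i ≤ k, piecesOfJumps k τ d s u i = 0 := fun i hi =>
    hzero.unique hτ (Q := 0) (fun _ _ _ _ => by simp) hi
  refine Prod.ext (Subtype.ext ?_) (funext fun j => Subtype.ext ?_)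
  · rw [← piecesOfJumps_zero (τ := τ) u, hpieces 0 k.zero_le]
    rfl
  · have hjump := piecesOfJumps_succ (τ := τ) u j
    rw [hpieces _ j.2, hpieces _ j.2.le, zero_add] at hjump
    exact (mul_eq_zero.1 hjump.symm).resolve_left (pow_ne_zero _ (X_sub_C_ne_zero _))

theorem range_splineOfJumps (hτ : IsKnotSequence k τ 0 1) :
    (LinearMap.range (splineOfJumps k τ d s) : Set (Icc (0 : ℝ) 1 → ℝ)) = SplineSpace k τ d s := by
  ext g
  constructor
  · rintro ⟨u, rfl⟩
    have hjump := hasJumpOrder_piecesOfJumps (τ := τ) u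
    exact ⟨_, isSplineOn_iff_exists_hasPieces.2 ⟨_,
      fun i _ => natDegree_le_iff_mem_degreeLT.2 (piecesOfJumps_mem_degreeLT u i),
      hasPieces_glue hτ hjump fun i => (s i).succ_ne_zero, hjump⟩, splineOfJumps_apply u⟩
  · rintro ⟨f, hf, hg⟩
    obtain ⟨P, hdeg, hpieces, hP⟩ := isSplineOn_iff_exists_hasPieces.1 hf
    obtain ⟨u, hu⟩ := exists_piecesOfJumps_eq
      (fun i hi => natDegree_le_iff_mem_degreeLT.1 (hdeg i hi)) hP
    refine ⟨u, funext fun x => ?_⟩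
    rw [splineOfJumps_apply, hg, hpieces.eqOn_glue hτ x.2, glue_apply, glue_apply,
      hu _ (pieceIndex_le k τ x)]

theorem finrank_span_splineSpace (hτ : IsKnotSequence k τ 0 1) :
    Module.finrank ℝ (Submodule.span ℝ (SplineSpace k τ d s)) =
      d + 1 + ∑ i ∈ Finset.Icc 1 k, (d - s i) := by
  have (n : ℕ) : Module.Finite ℝ (degreeLT ℝ n) := .of_basis (degreeLT.basis ℝ n)
  rw [← range_splineOfJumps hτ, Submodule.span_eq,
    LinearMap.finrank_range_of_inj (splineOfJumps_injective hτ), Module.finrank_prod,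
    Module.finrank_pi_fintype]
  simp only [finrank_degreeLT]
  rw [← Finset.sum_range fun j => d - s (j + 1), Finset.range_eq_Ico,
    Finset.sum_Ico_add' (fun j => d - s j) 0 k 1]
  rfl

theorem sum_sub_ite {r : ℕ} (hr : r < d) (I : Finset ℕ) (S : ℕ → Prop) [DecidablePred S] :
    ∑ i ∈ I, (d - if S i then r else r + 1) = I.card * (d - r - 1) + (I.filter S).card := by
  have hterm (i : ℕ) : (d - if S i then r else r + 1) = d - r - 1 + if S i then 1 else 0 := by
    split_ifs <;> omega
  simp only [hterm, Finset.sum_add_distrib, Finset.sum_const, smul_eq_mul, Finset.card_filter]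

end Dimension

theorem stmt7_general {p r k : ℕ} (hr : 2 ≤ r) (hrp : r < p) {τ : ℕ → ℝ}
    (hτ : IsKnotSequence k τ 0 1) {αtL αtR βL βR q : ℝ[X]}
    (hdαL : (αtL * q).natDegree ≤ 1) (hdαR : (αtR * q).natDegree ≤ 1)
    (hdβL : βL.natDegree ≤ 1) (hdβR : βR.natDegree ≤ 1)
    (hαL : ∀ v ∈ Icc (0 : ℝ) 1, (αtL * q).eval v ≠ 0)
    (hαR : ∀ v ∈ Icc (0 : ℝ) 1, (αtR * q).eval v ≠ 0) :
    Gamma0 k τ p r αtL αtR βL βR q = SplineSpace k τ p (fun i =>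
      if (αtL * q * βR - αtR * q * βL).eval (τ i) = 0 then r else r + 1) ∧
    Module.finrank ℝ (Submodule.span ℝ (Gamma0 k τ p r αtL αtR βL βR q)) =
      k * (p - r - 1) + p +
        (Finset.filter (fun i => (αtL * q * βR - αtR * q * βL).eval (τ i) = 0)
          (Finset.Icc 1 k)).card + 1 := by
  have hΓ := (Gamma0_subset_splineSpace (p := p) (r := r) hτ αtL αtR βL βR q).antisymm
    (splineSpace_subset_Gamma0 hτ (by omega) hr hdαL hdαR hdβL hdβR hαL hαR)
  refine ⟨hΓ, ?_⟩
  rw [hΓ, finrank_span_splineSpace hτ, sum_sub_ite hrp, Nat.card_Icc, Nat.add_sub_cancel]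
  ring

/-- the space Γ₀ and its dimension. -/
theorem stmt7 (p r k : ℕ) (hp : 5 ≤ p) (hr2 : 2 ≤ r) (hrp : r + 3 ≤ p)
    (τ : ℕ → ℝ) (hτ0 : τ 0 = 0) (hτ1 : τ (k+1) = 1)
    (hτ : ∀ i ≤ k, τ i < τ (i+1))
    (αL αR βL βR : Polynomial ℝ)
    (hdαL : αL.natDegree ≤ 1) (hdαR : αR.natDegree ≤ 1)
    (hdβL : βL.natDegree ≤ 1) (hdβR : βR.natDegree ≤ 1)
    (hsign : ∀ v ∈ Set.Icc (0:ℝ) 1, αL.eval v * αR.eval v < 0)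
    -- q is the monic greatest common divisor of αL and αR
    (q : Polynomial ℝ) (hqM : q.Monic) (hqL : q ∣ αL) (hqR : q ∣ αR)
    (hqgcd : ∀ d : Polynomial ℝ, d ∣ αL → d ∣ αR → d ∣ q)
    -- α̃^(S) = α^(S)/q
    (αtL αtR : Polynomial ℝ) (hαtL : αtL * q = αL) (hαtR : αtR * q = αR) :
    Gamma0 k τ p r αtL αtR βL βR q =
      SplineSpace k τ p
        (fun i => if (αL * βR - αR * βL).eval (τ i) = 0 then r else r + 1) ∧
    Module.finrank ℝ (Submodule.span ℝ (Gamma0 k τ p r αtL αtR βL βR q)) =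
      k * (p - r - 1) + p +
        (Finset.filter (fun i => (αL * βR - αR * βL).eval (τ i) = 0)
          (Finset.Icc 1 k)).card + 1 := by
  subst hαtL hαtR
  exact stmt7_general hr2 (by omega)
    ⟨hτ0, hτ1, strictMonoOn_Iic_of_lt_succ fun i hi => hτ i (Nat.le_of_lt_succ hi)⟩
    hdαL hdαR hdβL hdβR (fun v hv => left_ne_zero_of_mul (hsign v hv).ne)
    (fun v hv => right_ne_zero_of_mul (hsign v hv).ne)
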